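/- arXiv:2412.16416 — 5 statements merged into one kernel-verified Lean document; each statement's English description precedes it below -/
import Mathlib

section
/- Let d ≥ 1, let τ : (0,1)^d → ℝ^d have components τ_1,…,τ_d each possessing continuous mixed first-order partial derivatives ∂^v τ_i for all subsets v ⊆ {1,…,d}, and let f : ℝ^d → ℝ have continuous partial derivatives ∂^λ f for all multi-indices λ ∈ ℕ_0^d with |λ| ≤ d. Assume (i) for every B > 0 there exists C > 0 such that |∂^λ f(τ(u))| ≤ C ∏_{j=1}^d min(u_j, 1-u_j)^{-B} for all multi-indices λ with |λ| ≤ d and all u ∈ (0,1)^d; and (ii) for every B > 0 there exists C > 0 such that |∂^v τ_i(u)| ≤ C ∏_{j=1}^d min(u_j, 1-u_j)^{-B - 1[j∈v]} for all i ∈ {1,…,d}, all v ⊆ {1,…,d}, and all u ∈ (0,1)^d. Then the composition h = f ∘ τ satisfies the boundary growth condition: for every B > 0 there exists C > 0 such that |∂^v h(u)| ≤ C ∏_{j=1}^d min(u_j, 1-u_j)^{-B - 1[j∈v]} for all v ⊆ {1,…,d} and all u ∈ (0,1)^d. -/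
/-- Partial derivative of `g : ℝ^d → ℝ` in coordinate `i`. -/
noncomputable def partialD {d : ℕ} (i : Fin d) (g : (Fin d → ℝ) → ℝ) : (Fin d → ℝ) → ℝ :=
  fun x => deriv (fun t => g (Function.update x i t)) (x i)

/-- Mixed first-order partial derivative `∂^v g` with respect to the variables indexed by the
subset `v ⊆ {1,…,d}`, with `∂^∅ g = g`. -/
noncomputable def partialDSet {d : ℕ} (v : Finset (Fin d)) (g : (Fin d → ℝ) → ℝ) :
    (Fin d → ℝ) → ℝ :=
  v.toList.foldr partialD g

/-- Partial derivative `∂^λ f` for a multi-index `λ ∈ ℕ_0^d`: differentiate `λ_j` times with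
respect to the `j`-th variable. -/
noncomputable def partialDMulti {d : ℕ} (lam : Fin d → ℕ) (f : (Fin d → ℝ) → ℝ) :
    (Fin d → ℝ) → ℝ :=
  (List.finRange d).foldr (fun i g => (partialD i)^[lam i] g) f


section helpers
open Set

variable {d : ℕ}

theorem aux_partialD_eq {g : (Fin d → ℝ) → ℝ} {x : Fin d → ℝ} (i : Fin d)
    (h : DifferentiableAt ℝ g x) : partialD i g x = fderiv ℝ g x (Pi.single i 1) := by
  unfold partialD
  have h1 : HasDerivAt (Function.update x i) (Pi.single i (1:ℝ)) (x i) := hasDerivAt_update x i (x i)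
  have h2 : HasFDerivAt g (fderiv ℝ g x) (Function.update x i (x i)) := by
    rw [Function.update_eq_self]; exact h.hasFDerivAt
  exact (h2.comp_hasDerivAt (x i) h1).deriv

theorem aux_partialD_congr {g k : (Fin d → ℝ) → ℝ} {s : Set (Fin d → ℝ)} (hs : IsOpen s)
    (i : Fin d) (h : EqOn g k s) : EqOn (partialD i g) (partialD i k) s := by
  intro x hx
  unfold partialD
  apply Filter.EventuallyEq.deriv_eq
  have hc : ContinuousAt (Function.update x i) (x i) :=
    (hasDerivAt_update x i (x i)).continuousAt
  have : s ∈ nhds (Function.update x i (x i)) := by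
    rw [Function.update_eq_self]; exact hs.mem_nhds hx
  filter_upwards [hc this] with t ht
  exact h ht

theorem aux_partialD_contDiffOn {g : (Fin d → ℝ) → ℝ} {s : Set (Fin d → ℝ)} (hs : IsOpen s)
    (i : Fin d) {m : ℕ} (h : ContDiffOn ℝ ((m + 1 : ℕ)) g s) :
    ContDiffOn ℝ m (partialD i g) s := by
  have h1 : ContDiffOn ℝ m (fderiv ℝ g) s := h.fderiv_of_isOpen hs (by norm_cast)
  have h2 : ContDiffOn ℝ m (fun x => fderiv ℝ g x (Pi.single i 1)) s :=
    h1.clm_apply contDiffOn_const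
  refine h2.congr fun x hx => aux_partialD_eq i ?_
  exact (h.differentiableOn (by simp)).differentiableAt (hs.mem_nhds hx)

theorem aux_foldr_contDiffOn {g : (Fin d → ℝ) → ℝ} {s : Set (Fin d → ℝ)} (hs : IsOpen s)
    {n : ℕ} (h : ContDiffOn ℝ n g s) (l : List (Fin d)) :
    ∀ m : ℕ, l.length + m ≤ n → ContDiffOn ℝ m (l.foldr partialD g) s := by
  induction l with
  | nil => intro m hm; exact h.of_le (by simpa using hm)
  | cons a l ih =>
    intro m hm
    exact aux_partialD_contDiffOn hs a (ih (m + 1) (by simp at hm; omega))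

theorem aux_partialD_comm {g : (Fin d → ℝ) → ℝ} {s : Set (Fin d → ℝ)} (hs : IsOpen s)
    (h : ContDiffOn ℝ (2 : ℕ) g s) (i j : Fin d) :
    EqOn (partialD i (partialD j g)) (partialD j (partialD i g)) s := by
  have hd : ∀ x ∈ s, DifferentiableAt ℝ g x := fun x hx =>
    (h.differentiableOn (by simp)).differentiableAt (hs.mem_nhds hx)
  have h1 : ContDiffOn ℝ (1 : ℕ) (fderiv ℝ g) s := h.fderiv_of_isOpen hs (by norm_cast)
  have key : ∀ a b : Fin d, ∀ x ∈ s, partialD a (partialD b g) x =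
      fderiv ℝ (fderiv ℝ g) x (Pi.single a 1) (Pi.single b 1) := by
    intro a b x hx
    have hx' : DifferentiableAt ℝ (fderiv ℝ g) x :=
      (h1.differentiableOn (by simp)).differentiableAt (hs.mem_nhds hx)
    rw [aux_partialD_congr hs a (k := fun x => fderiv ℝ g x (Pi.single b 1))
      (fun y hy => aux_partialD_eq b (hd y hy)) hx]
    rw [aux_partialD_eq a (hx'.clm_apply (differentiableAt_const _))]
    rw [fderiv_clm_apply hx' (differentiableAt_const _)]
    simp
  intro x hx
  rw [key i j x hx, key j i x hx]
  have := (h.contDiffAt (hs.mem_nhds hx)).isSymmSndFDerivAt (by simp)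
  exact this _ _

theorem aux_perm {g : (Fin d → ℝ) → ℝ} {s : Set (Fin d → ℝ)} (hs : IsOpen s)
    {n : ℕ} (h : ContDiffOn ℝ n g s) {l₁ l₂ : List (Fin d)} (hp : l₁.Perm l₂) :
    l₁.length ≤ n → EqOn (l₁.foldr partialD g) (l₂.foldr partialD g) s := by
  induction hp with
  | nil => intro _ x _; rfl
  | cons a _ ih =>
    intro hl
    exact aux_partialD_congr hs a (ih (by simp at hl; omega))
  | swap a b l =>
    intro hl
    exact aux_partialD_comm hs (aux_foldr_contDiffOn hs h l 2 (by simp at hl; omega)) b a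
  | trans h1 _ ih1 ih2 =>
    intro hl
    exact (ih1 hl).trans (ih2 (by rw [← h1.length_eq]; exact hl))

theorem aux_multi (lam : Fin d → ℕ) (f : (Fin d → ℝ) → ℝ) :
    partialDMulti lam f =
      ((List.finRange d).flatMap (fun i => List.replicate (lam i) i)).foldr partialD f := by
  unfold partialDMulti
  induction (List.finRange d) with
  | nil => rfl
  | cons a l ih =>
    simp only [List.foldr_cons, List.flatMap_cons, List.foldr_append, ih]
    generalize List.foldr partialD f _ = g
    induction (lam a) with
    | zero => rfl
    | succ k ihk => rw [Function.iterate_succ_apply', ihk]; rfl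

theorem aux_multi_list {f : (Fin d → ℝ) → ℝ} {n : ℕ} (hf : ContDiff ℝ n f) (L : List (Fin d))
    (hL : L.length ≤ n) : L.foldr partialD f = partialDMulti (fun i => L.count i) f := by
  rw [aux_multi]
  funext x
  refine aux_perm isOpen_univ hf.contDiffOn ?_ hL (mem_univ x)
  rw [List.perm_iff_count]
  intro a
  rw [List.count_flatMap]
  have : (List.map (List.count a ∘ fun i => List.replicate (List.count i L) i)
      (List.finRange d)).sum = ∑ i, if i = a then List.count i L else 0 := by
    rw [← List.ofFn_eq_map, List.sum_ofFn]
    refine Finset.sum_congr rfl fun i _ => ?_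
    simp [List.count_replicate]
  rw [this]; simp

def auxU (d : ℕ) : Set (Fin d → ℝ) := {u : Fin d → ℝ | ∀ j, u j ∈ Set.Ioo (0:ℝ) 1}

theorem auxU_open : IsOpen (auxU d) := by
  have : auxU d = Set.pi univ (fun _ => Set.Ioo (0:ℝ) 1) := by ext; simp [auxU]
  rw [this]
  exact isOpen_set_pi finite_univ (fun _ _ => isOpen_Ioo)

def auxGr (w : Finset (Fin d)) (φ : (Fin d → ℝ) → ℝ) : Prop :=
  ∀ B : ℝ, 0 < B → ∃ C : ℝ, 0 < C ∧ ∀ u ∈ auxU d,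
    |φ u| ≤ C * ∏ j, (min (u j) (1 - u j)) ^ (-(B + if j ∈ w then (1:ℝ) else 0))

theorem aux_min_pos {u : Fin d → ℝ} (hu : u ∈ auxU d) (j : Fin d) : 0 < min (u j) (1 - u j) :=
  lt_min (hu j).1 (by linarith [(hu j).2])

theorem aux_prod_nonneg {u : Fin d → ℝ} (hu : u ∈ auxU d) (e : Fin d → ℝ) :
    0 ≤ ∏ j, (min (u j) (1 - u j)) ^ (e j) :=
  Finset.prod_nonneg fun j _ => Real.rpow_nonneg (aux_min_pos hu j).le _

theorem auxGr_zero (w : Finset (Fin d)) : auxGr w (fun _ => 0) := by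
  intro B _
  refine ⟨1, one_pos, fun u hu => ?_⟩
  simpa using aux_prod_nonneg hu _

theorem auxGr_add {w : Finset (Fin d)} {φ ψ : (Fin d → ℝ) → ℝ} (h1 : auxGr w φ) (h2 : auxGr w ψ) :
    auxGr w (fun u => φ u + ψ u) := by
  intro B hB
  obtain ⟨C1, hC1, h1⟩ := h1 B hB
  obtain ⟨C2, hC2, h2⟩ := h2 B hB
  refine ⟨C1 + C2, by positivity, fun u hu => ?_⟩
  rw [add_mul]
  exact (abs_add_le _ _).trans (add_le_add (h1 u hu) (h2 u hu))

theorem auxGr_mul {w v : Finset (Fin d)} {φ ψ : (Fin d → ℝ) → ℝ} (h1 : auxGr w φ)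
    (h2 : auxGr v ψ) (hwv : Disjoint w v) : auxGr (w ∪ v) (fun u => φ u * ψ u) := by
  intro B hB
  obtain ⟨C1, hC1, h1⟩ := h1 (B/2) (by positivity)
  obtain ⟨C2, hC2, h2⟩ := h2 (B/2) (by positivity)
  refine ⟨C1 * C2, by positivity, fun u hu => ?_⟩
  have e : ∏ j, (min (u j) (1 - u j)) ^ (-(B + if j ∈ w ∪ v then (1:ℝ) else 0)) =
      (∏ j, (min (u j) (1 - u j)) ^ (-(B/2 + if j ∈ w then (1:ℝ) else 0))) *
      ∏ j, (min (u j) (1 - u j)) ^ (-(B/2 + if j ∈ v then (1:ℝ) else 0)) := by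
    rw [← Finset.prod_mul_distrib]
    refine Finset.prod_congr rfl fun j _ => ?_
    rw [← Real.rpow_add (aux_min_pos hu j)]
    congr 1
    have := fun (hw : j ∈ w) => (Finset.disjoint_left.1 hwv) hw
    by_cases hw : j ∈ w <;> by_cases hv : j ∈ v <;> simp [hw, hv] <;> first | (exact absurd hv (this hw)) | ring
  rw [e, abs_mul, mul_mul_mul_comm]
  exact mul_le_mul (h1 u hu) (h2 u hu) (abs_nonneg _)
    (mul_nonneg hC1.le (aux_prod_nonneg hu _))

inductive AuxT (τ : (Fin d → ℝ) → (Fin d → ℝ)) (f : (Fin d → ℝ) → ℝ) (n : ℕ) :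
    Finset (Fin d) → ((Fin d → ℝ) → ℝ) → Prop
  | base (L : List (Fin d)) (hL : L.length ≤ n) : AuxT τ f n ∅ (fun u => L.foldr partialD f (τ u))
  | zero (w : Finset (Fin d)) : AuxT τ f n w (fun _ => 0)
  | add (w : Finset (Fin d)) (φ ψ : (Fin d → ℝ) → ℝ) : AuxT τ f n w φ → AuxT τ f n w ψ →
      AuxT τ f n w (fun u => φ u + ψ u)
  | mul (w w' : Finset (Fin d)) (φ : (Fin d → ℝ) → ℝ) (i : Fin d) (l : List (Fin d)) :
      AuxT τ f n w φ → l.Nodup → Disjoint w l.toFinset → w' = w ∪ l.toFinset →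
      AuxT τ f n w' (fun u => φ u * l.foldr partialD (fun x => τ x i) u)

variable {τ : (Fin d → ℝ) → (Fin d → ℝ)} {f : (Fin d → ℝ) → ℝ}

theorem AuxT.mono {n : ℕ} {w : Finset (Fin d)} {φ : (Fin d → ℝ) → ℝ} (h : AuxT τ f n w φ) :
    AuxT τ f (n + 1) w φ := by
  induction h with
  | base L hL => exact .base L (by omega)
  | zero w => exact .zero w
  | add w φ ψ _ _ ih1 ih2 => exact .add w φ ψ ih1 ih2
  | mul w w' φ i l _ h1 h2 h3 ih => exact .mul w w' φ i l ih h1 h2 h3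

theorem AuxT.sum {n : ℕ} {w : Finset (Fin d)} {φ : Fin d → (Fin d → ℝ) → ℝ}
    (h : ∀ i, AuxT τ f n w (φ i)) (s : Finset (Fin d)) :
    AuxT τ f n w (fun u => ∑ i ∈ s, φ i u) := by
  induction s using Finset.induction_on with
  | empty => simpa using AuxT.zero w
  | insert a s ha ih =>
    simp only [Finset.sum_insert ha]
    exact .add _ _ _ (h a) ih

theorem AuxT.deriv (hτ : ∀ i : Fin d, ContDiffOn ℝ d (fun u => τ u i) (auxU d))
    (hf : ContDiff ℝ d f) {n : ℕ} {w : Finset (Fin d)} {φ : (Fin d → ℝ) → ℝ}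
    (h : AuxT τ f n w φ) (hn : n < d) (j : Fin d) (hj : j ∉ w) :
    DifferentiableOn ℝ φ (auxU d) ∧ ∃ ψ, AuxT τ f (n + 1) (insert j w) ψ ∧
      EqOn (partialD j φ) ψ (auxU d) := by
  have hU : IsOpen (auxU d) := auxU_open
  induction h with
  | base L hL =>
    have hg : Differentiable ℝ (L.foldr partialD f) := by
      have := aux_foldr_contDiffOn isOpen_univ hf.contDiffOn L 1 (by omega)
      exact (contDiffOn_univ.1 this).differentiable (by simp)
    have hτd : ∀ x ∈ auxU d, ∀ i, DifferentiableAt ℝ (fun u => τ u i) x := fun x hx i =>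
      ((hτ i).differentiableOn (by simp; omega)).differentiableAt (hU.mem_nhds hx)
    have hτd' : ∀ x ∈ auxU d, DifferentiableAt ℝ τ x := fun x hx =>
      differentiableAt_pi.2 (hτd x hx)
    refine ⟨fun x hx => ((hg (τ x)).comp x (hτd' x hx)).differentiableWithinAt, 
      fun u => ∑ i, (i :: L).foldr partialD f (τ u) * [j].foldr partialD (fun x => τ x i) u, 
      AuxT.sum (fun i => ?_) _, ?_⟩
    · exact .mul ∅ _ _ i [j] (.base (i :: L) (by simp; omega)) (by simp) (by simp) (by simp)
    · intro x hx
      have hc : HasFDerivAt (fun u => L.foldr partialD f (τ u))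
        ((fderiv ℝ (L.foldr partialD f) (τ x)).comp (fderiv ℝ τ x)) x :=
        (hg (τ x)).hasFDerivAt.comp x (hτd' x hx).hasFDerivAt
      rw [aux_partialD_eq j hc.differentiableAt, hc.fderiv]
      simp only [ContinuousLinearMap.comp_apply, List.foldr_cons, List.foldr_nil]
      have e : fderiv ℝ τ x (Pi.single j 1) =
          ∑ i, partialD j (fun x => τ x i) x • (Pi.single i (1:ℝ) : Fin d → ℝ) := by
        funext k
        have : fderiv ℝ τ x (Pi.single j 1) k = fderiv ℝ (fun u => τ u k) x (Pi.single j 1) := by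
          rw [fderiv_pi (hτd x hx)]; rfl
        rw [this, ← aux_partialD_eq j (hτd x hx k)]
        simp [Finset.sum_apply, Pi.single_apply]
      rw [e, map_sum]
      refine Finset.sum_congr rfl fun i _ => ?_
      rw [map_smul, aux_partialD_eq i (hg (τ x)), smul_eq_mul, mul_comm]
  | zero w =>
    refine ⟨differentiableOn_const _, fun _ => 0, .zero _, fun x _ => ?_⟩
    simp [partialD]
  | add w φ ψ _ _ ih1 ih2 =>
    obtain ⟨d1, φ', t1, e1⟩ := ih1 hj
    obtain ⟨d2, ψ', t2, e2⟩ := ih2 hj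
    refine ⟨d1.add d2, _, .add _ _ _ t1 t2, fun x hx => ?_⟩
    have d1 := d1.differentiableAt (hU.mem_nhds hx)
    have d2 := d2.differentiableAt (hU.mem_nhds hx)
    rw [← e1 hx, ← e2 hx, aux_partialD_eq j d1, aux_partialD_eq j d2,
      aux_partialD_eq j (d1.fun_add d2), fderiv_fun_add d1 d2]
    rfl
  | mul w w' φ i l hT h1 h2 h3 ih =>
    subst h3
    simp only [Finset.mem_union, List.mem_toFinset, not_or] at hj
    obtain ⟨hjw, hjl⟩ := hj
    obtain ⟨d1, φ', t1, e1⟩ := ih hjw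
    have hnd : (j :: l).Nodup := List.nodup_cons.2 ⟨hjl, h1⟩
    have hlen : l.length + 1 ≤ d := by simpa using hnd.length_le_card
    have d2 : DifferentiableOn ℝ (l.foldr partialD (fun x => τ x i)) (auxU d) :=
      (aux_foldr_contDiffOn hU (hτ i) l 1 hlen).differentiableOn (by simp)
    refine ⟨d1.mul d2, _, .add _ _ _
      (.mul (insert j w) _ φ' i l t1 h1 ?_ (by simp))
      (.mul w _ φ i (j :: l) hT.mono hnd ?_ (by simp)), fun x hx => ?_⟩
    · rw [Finset.disjoint_insert_left]; exact ⟨by simpa using hjl, h2⟩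
    · rw [List.toFinset_cons, Finset.disjoint_insert_right]; exact ⟨hjw, h2⟩
    have d1 := d1.differentiableAt (hU.mem_nhds hx)
    have d2 := d2.differentiableAt (hU.mem_nhds hx)
    rw [← e1 hx, List.foldr_cons, aux_partialD_eq j d1, aux_partialD_eq j d2,
      aux_partialD_eq j (d1.fun_mul d2), fderiv_fun_mul d1 d2]
    simp
    ring

theorem AuxT.gr {n : ℕ} (hn : n ≤ d)
    (hF : ∀ L : List (Fin d), L.length ≤ d → auxGr ∅ (fun u => L.foldr partialD f (τ u)))
    (hT : ∀ i, ∀ l : List (Fin d), l.Nodup →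
      auxGr l.toFinset (l.foldr partialD (fun x => τ x i)))
    {w : Finset (Fin d)} {φ : (Fin d → ℝ) → ℝ}
    (h : AuxT τ f n w φ) : auxGr w φ := by
  induction h with
  | base L hL => exact hF L (hL.trans hn)
  | zero w => exact auxGr_zero w
  | add w φ ψ _ _ ih1 ih2 => exact auxGr_add ih1 ih2
  | mul w w' φ i l _ h1 h2 h3 ih => subst h3; exact auxGr_mul ih (hT i l h1) h2

theorem AuxT.list (hτ : ∀ i : Fin d, ContDiffOn ℝ d (fun u => τ u i) (auxU d))
    (hf : ContDiff ℝ d f) (l : List (Fin d)) (hl : l.Nodup) :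
    ∃ ψ, AuxT τ f l.length l.toFinset ψ ∧ EqOn (l.foldr partialD (f ∘ τ)) ψ (auxU d) := by
  induction l with
  | nil => exact ⟨_, .base [] le_rfl, fun x _ => rfl⟩
  | cons a l ih =>
    have hlen : l.length + 1 ≤ d := by simpa using hl.length_le_card
    obtain ⟨hal, hl⟩ := List.nodup_cons.1 hl
    obtain ⟨ψ, h1, h2⟩ := ih hl
    obtain ⟨_, χ, h3, h4⟩ := h1.deriv hτ hf hlen a (by simpa using hal)
    refine ⟨χ, by simpa using h3, (aux_partialD_congr auxU_open a h2).trans h4⟩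

end helpers

/-- If (i) every partial derivative `∂^λ f` with `|λ| ≤ d`, evaluated at `τ(u)`, is bounded by
`C ∏_j min(u_j, 1-u_j)^{-B}` for arbitrarily small `B > 0`, and (ii) every mixed partial
`∂^v τ_i` is bounded by `C ∏_j min(u_j, 1-u_j)^{-B-1[j∈v]}` for arbitrarily small `B > 0`,
then `h = f ∘ τ` satisfies the boundary growth condition:
`|∂^v h(u)| ≤ C ∏_j min(u_j, 1-u_j)^{-B-1[j∈v]}` for arbitrarily small `B > 0`. -/
theorem stmt_0 (d : ℕ) (hd : 1 ≤ d)
    (τ : (Fin d → ℝ) → (Fin d → ℝ)) (f : (Fin d → ℝ) → ℝ)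
    (hτsmooth : ∀ i : Fin d, ContDiffOn ℝ d (fun u => τ u i)
      {u : Fin d → ℝ | ∀ j, u j ∈ Set.Ioo (0:ℝ) 1})
    (hfsmooth : ContDiff ℝ d f)
    (hf : ∀ B : ℝ, 0 < B → ∃ C : ℝ, 0 < C ∧ ∀ lam : Fin d → ℕ, (∑ j, lam j) ≤ d →
      ∀ u : Fin d → ℝ, (∀ j, u j ∈ Set.Ioo (0:ℝ) 1) →
      |partialDMulti lam f (τ u)| ≤ C * ∏ j, (min (u j) (1 - u j)) ^ (-B))
    (hτ : ∀ B : ℝ, 0 < B → ∃ C : ℝ, 0 < C ∧ ∀ (i : Fin d) (v : Finset (Fin d)),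
      ∀ u : Fin d → ℝ, (∀ j, u j ∈ Set.Ioo (0:ℝ) 1) →
      |partialDSet v (fun w => τ w i) u| ≤
        C * ∏ j, (min (u j) (1 - u j)) ^ (-(B + if j ∈ v then (1:ℝ) else 0))) :
    ∀ B : ℝ, 0 < B → ∃ C : ℝ, 0 < C ∧ ∀ v : Finset (Fin d),
      ∀ u : Fin d → ℝ, (∀ j, u j ∈ Set.Ioo (0:ℝ) 1) →
      |partialDSet v (f ∘ τ) u| ≤
        C * ∏ j, (min (u j) (1 - u j)) ^ (-(B + if j ∈ v then (1:ℝ) else 0)) := by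
  have hF : ∀ L : List (Fin d), L.length ≤ d →
      auxGr ∅ (fun u => L.foldr partialD f (τ u)) := by
    intro L hL B hB
    obtain ⟨C, hC, h⟩ := hf B hB
    refine ⟨C, hC, fun u hu => ?_⟩
    have hs : ∑ j, L.count j ≤ d := by
      have := Multiset.sum_count_eq_card (s := Finset.univ) (m := (L : Multiset (Fin d)))
        (fun a _ => Finset.mem_univ a)
      simp only [Multiset.coe_count, Multiset.coe_card] at this
      omega
    have := h (fun i => L.count i) hs u hu
    rw [← aux_multi_list hfsmooth L hL] at this
    simpa using this
  have hT : ∀ i, ∀ l : List (Fin d), l.Nodup →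
      auxGr l.toFinset (l.foldr partialD (fun x => τ x i)) := by
    intro i l hl B hB
    obtain ⟨C, hC, h⟩ := hτ B hB
    refine ⟨C, hC, fun u hu => ?_⟩
    have hp : l.Perm l.toFinset.toList := (List.toFinset_toList hl).symm
    rw [aux_perm auxU_open (hτsmooth i) hp (by simpa using hl.length_le_card) hu]
    exact h i l.toFinset u hu
  have main : ∀ v : Finset (Fin d), auxGr v (partialDSet v (f ∘ τ)) := by
    intro v B hB
    obtain ⟨ψ, h1, h2⟩ := AuxT.list hτsmooth hfsmooth v.toList v.nodup_toList
    obtain ⟨C, hC, h⟩ := h1.gr (by simpa using v.nodup_toList.length_le_card) hF hT B hB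
    refine ⟨C, hC, fun u hu => ?_⟩
    have := h u hu
    rw [← h2 hu, Finset.toList_toFinset] at this
    exact this
  intro B hB
  choose C hC h using fun v => main v B hB
  refine ⟨∑ v, C v, Finset.sum_pos (fun v _ => hC v) Finset.univ_nonempty, fun v u hu => ?_⟩
  refine (h v u hu).trans (mul_le_mul_of_nonneg_right ?_ (aux_prod_nonneg hu _))
  exact Finset.single_le_sum (f := C) (fun v _ => (hC v).le) (Finset.mem_univ v)
end

section
/- Let Φ⁻¹ : (0,1) → ℝ denote the inverse of the standard Gaussian CDF. Then for every u ∈ (0,1), the derivative satisfies (Φ⁻¹)'(u) = 1/φ(Φ⁻¹(u)) ≤ √(π/2) · min(u, 1-u)^{-1}. -/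
open MeasureTheory

/-- The standard Gaussian density `φ(z) = (2π)^{-1/2} e^{-z²/2}`. -/
noncomputable def gaussPDF (z : ℝ) : ℝ := (Real.sqrt (2 * Real.pi))⁻¹ * Real.exp (-z ^ 2 / 2)

/-- The standard Gaussian CDF `Φ(z) = ∫_{-∞}^z φ(t) dt`. -/
noncomputable def gaussCDF (z : ℝ) : ℝ := ∫ t in Set.Iic z, gaussPDF t

lemma gp_pos (z : ℝ) : 0 < gaussPDF z := by
  unfold gaussPDF; positivity

lemma gp_eq : gaussPDF = ProbabilityTheory.gaussianPDFReal 0 1 := by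
  ext z; simp [gaussPDF, ProbabilityTheory.gaussianPDFReal]

lemma gp_int : Integrable gaussPDF := by
  rw [gp_eq]; exact ProbabilityTheory.integrable_gaussianPDFReal 0 1

lemma gp_cont : Continuous gaussPDF := by
  unfold gaussPDF; fun_prop

lemma gp_one : ∫ t, gaussPDF t = 1 := by
  rw [gp_eq]; exact ProbabilityTheory.integral_gaussianPDFReal_eq_one 0 one_ne_zero

lemma gc_neg (z : ℝ) : gaussCDF (-z) = 1 - gaussCDF z := by
  have h1 : ∫ t in Set.Iic (-z), gaussPDF (-t) = ∫ t in Set.Ioi (- -z), gaussPDF t :=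
    integral_comp_neg_Iic (-z) gaussPDF
  have h2 : ∀ t, gaussPDF (-t) = gaussPDF t := fun t => by simp [gaussPDF]
  simp only [h2, neg_neg] at h1
  have h3 := intervalIntegral.integral_Iic_add_Ioi (b := z) gp_int.integrableOn gp_int.integrableOn
  rw [gp_one] at h3
  unfold gaussCDF
  linarith

lemma gc_deriv (z : ℝ) : HasDerivAt gaussCDF (gaussPDF z) z := by
  have h : gaussCDF = fun x => gaussCDF 0 + ∫ t in (0:ℝ)..x, gaussPDF t := by
    ext x
    have := intervalIntegral.integral_Iic_sub_Iic (a := 0) (b := x)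
      gp_int.integrableOn gp_int.integrableOn
    unfold gaussCDF
    linarith
  rw [h]
  exact (intervalIntegral.integral_hasDerivAt_right (gp_cont.intervalIntegrable _ _)
    (gp_cont.stronglyMeasurableAtFilter _ _) gp_cont.continuousAt).const_add _

lemma gc_mono : StrictMono gaussCDF :=
  strictMono_of_deriv_pos fun x => by rw [(gc_deriv x).deriv]; exact gp_pos x

lemma gc_nonneg (z : ℝ) : 0 ≤ gaussCDF z :=
  integral_nonneg fun t => (gp_pos t).le

lemma gc_pos (z : ℝ) : 0 < gaussCDF z :=
  (gc_nonneg (z - 1)).trans_lt (gc_mono (by linarith))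

lemma gc_lt (z : ℝ) : gaussCDF z < 1 := by
  have := gc_pos (-z); rw [gc_neg] at this; linarith

lemma sqrt_half : Real.sqrt (Real.pi / 2) = Real.sqrt (2 * Real.pi) / 2 := by
  rw [Real.sqrt_eq_iff_mul_self_eq (by positivity) (by positivity)]
  have := Real.mul_self_sqrt (show 0 ≤ 2 * Real.pi by positivity)
  linarith

lemma gc_bound (z : ℝ) (hz : z ≤ 0) : gaussCDF z ≤ Real.sqrt (Real.pi / 2) * gaussPDF z := by
  have h0 : gaussCDF 0 = 1 / 2 := by
    have := gc_neg 0; rw [neg_zero] at this; linarith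
  have h1 : gaussCDF z = ∫ t in Set.Iic (0:ℝ), gaussPDF (t + z) := by
    have := (measurePreserving_add_right volume z).setIntegral_preimage_emb
      (measurableEmbedding_addRight z) gaussPDF (Set.Iic z)
    unfold gaussCDF
    simpa using this.symm
  have h2 : ∫ t in Set.Iic (0:ℝ), gaussPDF (t + z) ≤
      ∫ t in Set.Iic (0:ℝ), (Real.sqrt (2 * Real.pi) * gaussPDF z) * gaussPDF t := by
    apply setIntegral_mono_on (gp_int.comp_add_right z).integrableOn
      (gp_int.const_mul _).integrableOn measurableSet_Iic
    intro t ht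
    have ht : t ≤ 0 := ht
    have hs : 0 < Real.sqrt (2 * Real.pi) := by positivity
    have e : Real.sqrt (2 * Real.pi) * gaussPDF z * gaussPDF t =
        (Real.sqrt (2 * Real.pi))⁻¹ * Real.exp (-z ^ 2 / 2 + -t ^ 2 / 2) := by
      unfold gaussPDF; rw [Real.exp_add]; field_simp
    rw [e]; unfold gaussPDF
    gcongr
    nlinarith [mul_nonneg_of_nonpos_of_nonpos ht hz]
  rw [integral_const_mul] at h2
  change _ ≤ _ * gaussCDF 0 at h2
  rw [h1, sqrt_half]
  rw [h0] at h2
  linarith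

/-- If `Φinv` is the inverse of the standard Gaussian CDF on `(0,1)`, then for every
`u ∈ (0,1)`, `(Φ⁻¹)'(u) = 1/φ(Φ⁻¹(u)) ≤ √(π/2) · min(u, 1-u)⁻¹`. -/
theorem stmt_4 (Φinv : ℝ → ℝ)
    (hΦinv : ∀ u ∈ Set.Ioo (0:ℝ) 1, gaussCDF (Φinv u) = u) :
    ∀ u ∈ Set.Ioo (0:ℝ) 1,
      deriv Φinv u = (gaussPDF (Φinv u))⁻¹ ∧
      (gaussPDF (Φinv u))⁻¹ ≤ Real.sqrt (Real.pi / 2) * (min u (1 - u))⁻¹ := by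
  intro u hu
  have hn : Set.Ioo (0:ℝ) 1 ∈ nhds u := isOpen_Ioo.mem_nhds hu
  constructor
  · have hm : StrictMonoOn Φinv (Set.Ioo 0 1) := by
      intro a ha b hb hab
      rw [← gc_mono.lt_iff_lt, hΦinv a ha, hΦinv b hb]; exact hab
    have hc : ContinuousAt Φinv u := by
      apply hm.continuousAt_of_image_mem_nhds hn
      have : Φinv '' Set.Ioo 0 1 = Set.univ := by
        apply Set.eq_univ_of_forall
        intro z
        have hz : gaussCDF z ∈ Set.Ioo (0:ℝ) 1 := ⟨gc_pos z, gc_lt z⟩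
        exact ⟨gaussCDF z, hz, gc_mono.injective (hΦinv _ hz)⟩
      rw [this]; exact Filter.univ_mem
    exact (HasDerivAt.of_local_left_inverse hc (gc_deriv _) (gp_pos _).ne'
      (Filter.mem_of_superset hn hΦinv)).deriv
  · have hmin : 0 < min u (1 - u) := lt_min hu.1 (by linarith [hu.2])
    have key : min u (1 - u) ≤ Real.sqrt (Real.pi / 2) * gaussPDF (Φinv u) := by
      rcases le_total (Φinv u) 0 with h | h
      · have := gc_bound _ h
        rw [hΦinv u hu] at this
        exact (min_le_left _ _).trans this
      · have := gc_bound (-Φinv u) (by linarith)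
        rw [gc_neg, hΦinv u hu] at this
        have e : gaussPDF (-Φinv u) = gaussPDF (Φinv u) := by simp [gaussPDF]
        rw [e] at this
        exact (min_le_right _ _).trans this
    have hp := gp_pos (Φinv u)
    rw [← div_eq_mul_inv, le_div_iff₀ hmin, inv_mul_le_iff₀ hp]
    linarith
end

section
/- Let F : ℝ → (0,1) be monotonically increasing with x ↦ log F(x) concave on ℝ. Let d ≥ 1, let c_1,…,c_d ∈ ℝ satisfy Σ_{k=1}^d |c_k| = 1, and let x_1,…,x_d ∈ ℝ. Then F(-|Σ_{k=1}^d c_k x_k|) ≥ ∏_{k=1}^d F(-|x_k|)^{|c_k|}. -/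
/-- Let `F : ℝ → (0,1)` be monotonically increasing with `log F` concave. If
`Σ_k |c_k| = 1` then `F(-|Σ_k c_k x_k|) ≥ ∏_k F(-|x_k|)^{|c_k|}`. -/
theorem stmt_11 (F : ℝ → ℝ)
    (hFrange : ∀ x : ℝ, F x ∈ Set.Ioo (0:ℝ) 1)
    (hFmono : Monotone F)
    (hFconc : ConcaveOn ℝ Set.univ fun x : ℝ => Real.log (F x))
    (d : ℕ) (hd : 1 ≤ d) (c x : Fin d → ℝ) (hc : ∑ k, |c k| = 1) :
    F (-|∑ k, c k * x k|) ≥ ∏ k, (F (-|x k|)) ^ |c k| := by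
  have hpos : ∀ y, 0 < F y := fun y => (hFrange y).1
  have hJ := hFconc.le_map_sum (t := Finset.univ) (w := fun k => |c k|)
    (p := fun k => -|x k|) (fun k _ => abs_nonneg _) hc (fun k _ => Set.mem_univ _)
  simp only [smul_eq_mul] at hJ
  have hT : ∑ k, |c k| * (-|x k|) ≤ -|∑ k, c k * x k| := by
    have h := Finset.abs_sum_le_sum_abs (fun k => c k * x k) Finset.univ
    simp only [abs_mul] at h
    simp only [mul_neg, Finset.sum_neg_distrib]
    linarith
  have hprod : 0 < ∏ k, (F (-|x k|)) ^ |c k| :=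
    Finset.prod_pos fun k _ => Real.rpow_pos_of_pos (hpos _) _
  refine le_trans ?_ (hFmono hT)
  rw [← Real.log_le_log_iff hprod (hpos _),
    Real.log_prod (fun k _ => (Real.rpow_pos_of_pos (hpos _) _).ne')]
  simp only [Real.log_rpow (hpos _)]
  exact hJ
end

section
/- Let F : ℝ → (0,1) be a strictly increasing, differentiable, surjective function (a CDF on ℝ) with x ↦ log F(x) concave and F(x) + F(-x) = 1 for all x. Let d ≥ 1 and K ≥ 0. For k = 1,…,K let L^k be a d×d lower-triangular real matrix with positive diagonal entries whose rows satisfy Σ_{j=1}^d |L^k_{ij}| = 1 for every i, and let T^k_1,…,T^k_d : ℝ → ℝ be strictly increasing bijections such that there exist B₁ > 0 and C₁ > 0 with min(F(z), 1-F(z))^{-1} ≤ C₁ · min(F((T^k_j)^{-1}(z)), 1 - F((T^k_j)^{-1}(z)))^{-B₁} for all z ∈ ℝ, all k, and all j. Define τ^{1:K} : (0,1)^d → ℝ^d by τ^{1:K}(u) = τ^K(⋯τ^1(F^{-1}(u))⋯) where F^{-1} is applied componentwise and τ^k(x) = (T^k_1((L^k x)_1), …, T^k_d((L^k x)_d)).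 Then there exist constants B > 0 and C > 0 such that for all j ∈ {1,…,d} and all u ∈ (0,1)^d, writing z = τ^{1:K}(u): min(F(z_j), 1-F(z_j))^{-1} ≤ C · ∏_{l=1}^d min(u_l, 1-u_l)^{-B}. -/
/-- Composition of autoregressive layers `τ^K ∘ ⋯ ∘ τ^1`, where layer `k` maps
`x ↦ (T^k_j ((L^k x)_j))_j`. -/
noncomputable def applyLayers {d K : ℕ} (L : Fin K → Matrix (Fin d) (Fin d) ℝ)
    (T : Fin K → Fin d → ℝ → ℝ) (x : Fin d → ℝ) : Fin d → ℝ :=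
  (List.finRange K).foldl (fun y k => fun j => T k j ((L k).mulVec y j)) x

theorem aux_min (F : ℝ → ℝ) (hFmono : StrictMono F) (hFsym : ∀ x : ℝ, F x + F (-x) = 1) (z : ℝ) :
    min (F z) (1 - F z) = F (-|z|) := by
  have h : 1 - F z = F (-z) := by linarith [hFsym z]
  rw [h]
  rcases le_total 0 z with hz | hz
  · rw [abs_of_nonneg hz]
    exact min_eq_right (hFmono.monotone (by linarith))
  · rw [abs_of_nonpos hz, neg_neg]
    exact min_eq_left (hFmono.monotone (by linarith))

theorem aux_row {d : ℕ} (A : Matrix (Fin d) (Fin d) ℝ) (i : Fin d) (h : ∑ j, |A i j| = 1)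
    (y : Fin d → ℝ) : ∃ j, |A.mulVec y i| ≤ |y j| := by
  haveI : Nonempty (Fin d) := ⟨i⟩
  obtain ⟨j, hj⟩ := Finite.exists_max (fun j => |y j|)
  refine ⟨j, ?_⟩
  calc |A.mulVec y i| = |∑ l, A i l * y l| := rfl
    _ ≤ ∑ l, |A i l * y l| := Finset.abs_sum_le_sum_abs _ _
    _ ≤ ∑ l, |A i l| * |y j| := by
        apply Finset.sum_le_sum
        intro l _
        rw [abs_mul]
        exact mul_le_mul_of_nonneg_left (hj l) (abs_nonneg _)
    _ = |y j| := by rw [← Finset.sum_mul, h, one_mul]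

theorem aux_fold {d K : ℕ} (F : ℝ → ℝ) (hFpos : ∀ x, 0 < F x) (hFmono : StrictMono F)
    (L : Fin K → Matrix (Fin d) (Fin d) ℝ)
    (hLrow : ∀ k i, ∑ j, |L k i j| = 1)
    (T : Fin K → Fin d → ℝ → ℝ)
    (B₁ C₁ : ℝ) (hB₁ : 0 < B₁) (hC₁ : 0 < C₁)
    (hT : ∀ k j (x : ℝ), (F (-|T k j x|))⁻¹ ≤ C₁ * ((F (-|x|))⁻¹) ^ B₁)
    (l : List (Fin K)) : ∃ B : ℝ, 0 < B ∧ ∃ C : ℝ, 0 < C ∧ ∀ (x : Fin d → ℝ) (R : ℝ), 0 ≤ R →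
      (∀ j, (F (-|x j|))⁻¹ ≤ R) → ∀ j,
      (F (-|l.foldl (fun y k => fun j => T k j ((L k).mulVec y j)) x j|))⁻¹ ≤ C * R ^ B := by
  induction l with
  | nil => exact ⟨1, one_pos, 1, one_pos, fun x R _ h j => by simpa using h j⟩
  | cons k l ih =>
    obtain ⟨B, hB, C, hC, ih⟩ := ih
    refine ⟨B₁ * B, by positivity, C * C₁ ^ B, by positivity, fun x R hR h j => ?_⟩
    have := ih (fun j => T k j ((L k).mulVec x j)) (C₁ * R ^ B₁) (by positivity) (fun j => by
      refine (hT k j _).trans ?_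
      obtain ⟨j', hj'⟩ := aux_row (L k) j (hLrow k j) x
      refine mul_le_mul_of_nonneg_left ?_ hC₁.le
      refine Real.rpow_le_rpow (inv_nonneg.2 (hFpos _).le) ?_ hB₁.le
      exact (inv_anti₀ (hFpos _) (hFmono.monotone (neg_le_neg hj'))).trans (h j')) j
    rw [Real.mul_rpow hC₁.le (by positivity), ← Real.rpow_mul hR, ← mul_assoc] at this
    simpa using this

/-- Growth of the composite map `τ^{1:K} = τ^K ∘ ⋯ ∘ τ^1 ∘ F⁻¹`: there exist `B, C > 0` such
that for all `j` and all `u ∈ (0,1)^d`, writing `z = τ^{1:K}(u)`,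
`min(F(z_j), 1-F(z_j))⁻¹ ≤ C ∏_l min(u_l, 1-u_l)^{-B}`. -/
theorem stmt_12 (d K : ℕ) (hd : 1 ≤ d)
    (F Finv : ℝ → ℝ)
    (hFrange : ∀ x : ℝ, F x ∈ Set.Ioo (0:ℝ) 1)
    (hFmono : StrictMono F)
    (hFdiff : Differentiable ℝ F)
    (hFsurj : ∀ y ∈ Set.Ioo (0:ℝ) 1, ∃ x, F x = y)
    (hFconc : ConcaveOn ℝ Set.univ fun x : ℝ => Real.log (F x))
    (hFsym : ∀ x : ℝ, F x + F (-x) = 1)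
    (hFinv : ∀ u ∈ Set.Ioo (0:ℝ) 1, F (Finv u) = u)
    (L : Fin K → Matrix (Fin d) (Fin d) ℝ)
    (hLtri : ∀ k, ∀ i j : Fin d, i < j → L k i j = 0)
    (hLdiag : ∀ k i, 0 < L k i i)
    (hLrow : ∀ k i, ∑ j, |L k i j| = 1)
    (T Tinv : Fin K → Fin d → ℝ → ℝ)
    (hTmono : ∀ k j, StrictMono (T k j))
    (hTbij : ∀ k j, Function.Bijective (T k j))
    (hTinv : ∀ k j, Function.RightInverse (Tinv k j) (T k j))
    (B₁ C₁ : ℝ) (hB₁ : 0 < B₁) (hC₁ : 0 < C₁)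
    (hTgrowth : ∀ k j (z : ℝ), (min (F z) (1 - F z))⁻¹ ≤
      C₁ * (min (F (Tinv k j z)) (1 - F (Tinv k j z))) ^ (-B₁)) :
    ∃ B : ℝ, 0 < B ∧ ∃ C : ℝ, 0 < C ∧ ∀ j : Fin d, ∀ u : Fin d → ℝ,
      (∀ l, u l ∈ Set.Ioo (0:ℝ) 1) →
      (min (F (applyLayers L T (fun i => Finv (u i)) j))
          (1 - F (applyLayers L T (fun i => Finv (u i)) j)))⁻¹ ≤
        C * ∏ l, (min (u l) (1 - u l)) ^ (-B) := by
  have hm := aux_min F hFmono hFsym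
  have hpos : ∀ x, 0 < F x := fun x => (hFrange x).1
  simp only [hm] at hTgrowth ⊢
  obtain ⟨B, hB, C, hC, h⟩ := aux_fold F hpos hFmono L hLrow T B₁ C₁ hB₁ hC₁ (fun k j x => by
    have h1 := hTgrowth k j (T k j x)
    have h2 : Tinv k j (T k j x) = x := (hTbij k j).1 (hTinv k j _)
    rw [h2, Real.rpow_neg (hpos _).le, ← Real.inv_rpow (hpos _).le] at h1
    exact h1) (List.finRange K)
  refine ⟨B, hB, C, hC, fun j u hu => ?_⟩
  have hupos : ∀ l, 0 < min (u l) (1 - u l) := fun l =>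
    lt_min (hu l).1 (by linarith [(hu l).2])
  have hone : ∀ l, 1 ≤ (min (u l) (1 - u l))⁻¹ := fun l =>
    (one_le_inv₀ (hupos l)).2 ((min_le_left _ _).trans (hu l).2.le)
  have hnn : ∀ l, 0 ≤ (min (u l) (1 - u l))⁻¹ := fun l => zero_le_one.trans (hone l)
  have key := h (fun i => Finv (u i)) (∏ l, (min (u l) (1 - u l))⁻¹)
    (Finset.prod_nonneg fun l _ => hnn l) (fun i => by
      rw [← hm, hFinv _ (hu i)]
      rw [← Finset.mul_prod_erase Finset.univ _ (Finset.mem_univ i)]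
      refine le_mul_of_one_le_right (hnn i) ?_
      calc (1:ℝ) = ∏ l ∈ Finset.univ.erase i, (1:ℝ) := by simp
        _ ≤ _ := Finset.prod_le_prod (fun _ _ => zero_le_one) (fun l _ => hone l)) j
  rw [← Real.finset_prod_rpow _ _ (fun l _ => hnn l)] at key
  have he : ∀ l, (min (u l) (1 - u l)) ^ (-B) = ((min (u l) (1 - u l))⁻¹) ^ B := fun l => by
    rw [Real.rpow_neg (hupos l).le, Real.inv_rpow (hupos l).le]
  simp only [he]
  exact key
end

section
/- Let F : ℝ → (0,1) be a strictly increasing, differentiable, surjective function with x ↦ log F(x) concave and F(x) + F(-x) = 1. Let d ≥ 1, K ≥ 0, and for k = 1,…,K let L^k be a d×d lower-triangular matrix with positive diagonal whose rows satisfy Σ_j |L^k_{ij}| = 1, and let T^k_1,…,T^k_d : ℝ → ℝ be strictly increasing bijections such that there exist B₁, C₁ > 0 with min(F(z), 1-F(z))^{-1} ≤ C₁·min(F((T^k_j)^{-1}(z)), 1-F((T^k_j)^{-1}(z)))^{-B₁} for all z ∈ ℝ, all k, j. Define τ = τ^K ∘ ⋯ ∘ τ^1 ∘ F⁻¹ :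 (0,1)^d → ℝ^d as above. Let f : ℝ^d → ℝ have continuous partial derivatives ∂^λ f for all multi-indices λ with |λ| ≤ d and satisfy: for every multi-index λ with |λ| ≤ d and every B > 0 there exists C > 0 with |∂^λ f(x)| ≤ C · ∏_{j=1}^d min(F(x_j), 1-F(x_j))^{-B} for all x ∈ ℝ^d. Then for every multi-index λ with |λ| ≤ d and every B > 0 there exists C > 0 such that |∂^λ f(τ(u))| ≤ C · ∏_{j=1}^d min(u_j, 1-u_j)^{-B} for all u ∈ (0,1)^d. -/
lemma aux_absmono (F : ℝ → ℝ) (hFmono : StrictMono F) (hFsym : ∀ x : ℝ, F x + F (-x) = 1)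
    {a b : ℝ} (h : |a| ≤ |b|) : min (F b) (1 - F b) ≤ min (F a) (1 - F a) := by
  have h1 := hFmono.monotone (abs_le.1 h).1
  have h2 := hFmono.monotone (abs_le.1 h).2
  have h3 := hFsym b
  rcases abs_choice b with hb | hb <;> rw [hb] at h1 h2
  · refine le_min ?_ ?_
    · exact (min_le_right _ _).trans (by linarith)
    · exact (min_le_right _ _).trans (by linarith)
  · rw [neg_neg] at h1
    refine le_min ?_ ?_
    · exact (min_le_left _ _).trans (by linarith)
    · exact (min_le_left _ _).trans (by linarith)

lemma aux_single {d : ℕ} (g : Fin d → ℝ) (hg : ∀ j, 1 ≤ g j) (i : Fin d) :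
    g i ≤ ∏ j, g j := by
  rw [← Finset.mul_prod_erase Finset.univ g (Finset.mem_univ i)]
  have : (1:ℝ) ≤ ∏ j ∈ Finset.univ.erase i, g j := by
    calc (1:ℝ) = ∏ j ∈ Finset.univ.erase i, (1:ℝ) := by simp
      _ ≤ _ := Finset.prod_le_prod (fun _ _ => zero_le_one) (fun j _ => hg j)
  exact le_mul_of_one_le_right (zero_le_one.trans (hg i)) this

lemma aux_layer {d : ℕ} (hd : 1 ≤ d) (G : ℝ → ℝ) (hG1 : ∀ x, 1 ≤ G x)
    (hGmono : ∀ a b : ℝ, |a| ≤ |b| → G a ≤ G b)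
    (L : Matrix (Fin d) (Fin d) ℝ) (hLrow : ∀ i, ∑ j, |L i j| = 1)
    (T : Fin d → ℝ → ℝ) (B₁ C₁ : ℝ) (hB₁ : 0 < B₁) (hC₁ : 0 < C₁)
    (hT : ∀ j z, G (T j z) ≤ C₁ * (G z) ^ B₁) (x : Fin d → ℝ) :
    ∏ j, G (T j (L.mulVec x j)) ≤ C₁ ^ d * (∏ j, G (x j)) ^ (B₁ * d) := by
  have hP : 0 ≤ ∏ j, G (x j) := Finset.prod_nonneg fun j _ => zero_le_one.trans (hG1 _)
  have key : ∀ i, G (L.mulVec x i) ≤ ∏ j, G (x j) := by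
    intro i
    haveI : Nonempty (Fin d) := ⟨i⟩
    obtain ⟨i0, hi0⟩ := Finite.exists_max (fun j => |x j|)
    refine (hGmono _ (x i0) ?_).trans (aux_single (fun j => G (x j)) (fun j => hG1 _) i0)
    calc |L.mulVec x i| = |∑ j, L i j * x j| := rfl
      _ ≤ ∑ j, |L i j * x j| := Finset.abs_sum_le_sum_abs _ _
      _ ≤ ∑ j, |L i j| * |x i0| := Finset.sum_le_sum fun j _ => by
          rw [abs_mul]; exact mul_le_mul_of_nonneg_left (hi0 j) (abs_nonneg _)
      _ = |x i0| := by rw [← Finset.sum_mul, hLrow, one_mul]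
  calc ∏ j, G (T j (L.mulVec x j)) ≤ ∏ j : Fin d, C₁ * (∏ j, G (x j)) ^ B₁ := by
        refine Finset.prod_le_prod (fun j _ => zero_le_one.trans (hG1 _)) fun j _ => ?_
        refine (hT j _).trans (mul_le_mul_of_nonneg_left ?_ hC₁.le)
        exact Real.rpow_le_rpow (zero_le_one.trans (hG1 _)) (key j) hB₁.le
    _ = _ := by
        rw [Finset.prod_const, Finset.card_univ, Fintype.card_fin, mul_pow,
          Real.rpow_mul hP, Real.rpow_natCast]

lemma aux_layers {d K : ℕ} (hd : 1 ≤ d) (G : ℝ → ℝ) (hG1 : ∀ x, 1 ≤ G x)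
    (hGmono : ∀ a b : ℝ, |a| ≤ |b| → G a ≤ G b)
    (L : Fin K → Matrix (Fin d) (Fin d) ℝ) (hLrow : ∀ k i, ∑ j, |L k i j| = 1)
    (T : Fin K → Fin d → ℝ → ℝ) (B₁ C₁ : ℝ) (hB₁ : 0 < B₁) (hC₁ : 0 < C₁)
    (hT : ∀ k j z, G (T k j z) ≤ C₁ * (G z) ^ B₁) (l : List (Fin K)) :
    ∃ C A : ℝ, 0 < C ∧ 0 < A ∧ ∀ x : Fin d → ℝ,
      ∏ j, G (l.foldl (fun y k => fun j => T k j ((L k).mulVec y j)) x j) ≤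
        C * (∏ j, G (x j)) ^ A := by
  induction l with
  | nil => exact ⟨1, 1, one_pos, one_pos, fun x => by simp⟩
  | cons k l ih =>
    obtain ⟨C, A, hC, hA, h⟩ := ih
    have hd' : (0:ℝ) < d := by exact_mod_cast hd
    refine ⟨C * (C₁ ^ d) ^ A, B₁ * d * A, by positivity, by positivity, fun x => ?_⟩
    have hP : ∀ x : Fin d → ℝ, 0 ≤ ∏ j, G (x j) :=
      fun x => Finset.prod_nonneg fun j _ => zero_le_one.trans (hG1 _)
    rw [List.foldl_cons]
    refine (h _).trans ?_
    rw [mul_assoc, Real.rpow_mul (hP x), ← Real.mul_rpow (by positivity)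
      (Real.rpow_nonneg (hP x) _)]
    refine mul_le_mul_of_nonneg_left ?_ hC.le
    exact Real.rpow_le_rpow (hP _)
      (aux_layer hd G hG1 hGmono (L k) (hLrow k) (T k) B₁ C₁ hB₁ hC₁ (hT k) x) hA.le

/-- Growth rate of `f` along the transport map: if every `∂^λ f` with `|λ| ≤ d` satisfies
`|∂^λ f(x)| ≤ C ∏_j min(F(x_j), 1-F(x_j))^{-B}` for arbitrarily small `B > 0`, then writing
`z = τ^{1:K}(u)` with `τ^{1:K} = τ^K ∘ ⋯ ∘ τ^1 ∘ F⁻¹`, for arbitrarily small `B > 0` one has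
`|∂^λ f(z)| ≤ C ∏_j min(u_j, 1-u_j)^{-B}` on `(0,1)^d`. -/
theorem stmt_14 (d K : ℕ) (hd : 1 ≤ d)
    (F Finv : ℝ → ℝ)
    (hFrange : ∀ x : ℝ, F x ∈ Set.Ioo (0:ℝ) 1)
    (hFmono : StrictMono F)
    (hFdiff : Differentiable ℝ F)
    (hFsurj : ∀ y ∈ Set.Ioo (0:ℝ) 1, ∃ x, F x = y)
    (hFconc : ConcaveOn ℝ Set.univ fun x : ℝ => Real.log (F x))
    (hFsym : ∀ x : ℝ, F x + F (-x) = 1)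
    (hFinv : ∀ u ∈ Set.Ioo (0:ℝ) 1, F (Finv u) = u)
    (L : Fin K → Matrix (Fin d) (Fin d) ℝ)
    (hLtri : ∀ k, ∀ i j : Fin d, i < j → L k i j = 0)
    (hLdiag : ∀ k i, 0 < L k i i)
    (hLrow : ∀ k i, ∑ j, |L k i j| = 1)
    (T Tinv : Fin K → Fin d → ℝ → ℝ)
    (hTmono : ∀ k j, StrictMono (T k j))
    (hTbij : ∀ k j, Function.Bijective (T k j))
    (hTinv : ∀ k j, Function.RightInverse (Tinv k j) (T k j))
    (B₁ C₁ : ℝ) (hB₁ : 0 < B₁) (hC₁ : 0 < C₁)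
    (hTgrowth : ∀ k j (z : ℝ), (min (F z) (1 - F z))⁻¹ ≤
      C₁ * (min (F (Tinv k j z)) (1 - F (Tinv k j z))) ^ (-B₁))
    (f : (Fin d → ℝ) → ℝ)
    (hfsmooth : ContDiff ℝ d f)
    (hf : ∀ lam : Fin d → ℕ, (∑ j, lam j) ≤ d → ∀ B : ℝ, 0 < B → ∃ C : ℝ, 0 < C ∧
      ∀ x : Fin d → ℝ, |partialDMulti lam f x| ≤
        C * ∏ j, (min (F (x j)) (1 - F (x j))) ^ (-B)) :
    ∀ lam : Fin d → ℕ, (∑ j, lam j) ≤ d → ∀ B : ℝ, 0 < B → ∃ C : ℝ, 0 < C ∧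
      ∀ u : Fin d → ℝ, (∀ j, u j ∈ Set.Ioo (0:ℝ) 1) →
      |partialDMulti lam f (applyLayers L T (fun l => Finv (u l)))| ≤
        C * ∏ j, (min (u j) (1 - u j)) ^ (-B) := by
  have hm0 : ∀ x, 0 < min (F x) (1 - F x) := fun x =>
    lt_min (hFrange x).1 (by linarith [(hFrange x).2])
  set G : ℝ → ℝ := fun x => (min (F x) (1 - F x))⁻¹ with hG
  have hG1 : ∀ x, 1 ≤ G x := fun x =>
    (one_le_inv₀ (hm0 x)).2 ((min_le_left _ _).trans (hFrange x).2.le)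
  have hGmono : ∀ a b : ℝ, |a| ≤ |b| → G a ≤ G b := fun a b h =>
    inv_anti₀ (hm0 b) (aux_absmono F hFmono hFsym h)
  have hpow : ∀ (x B : ℝ), (min (F x) (1 - F x)) ^ (-B) = (G x) ^ B := fun x B => by
    rw [Real.rpow_neg (hm0 x).le, ← Real.inv_rpow (hm0 x).le]
  have hT : ∀ k j z, G (T k j z) ≤ C₁ * (G z) ^ B₁ := by
    intro k j z
    have h := hTgrowth k j (T k j z)
    have h2 : Tinv k j (T k j z) = z := (hTbij k j).1 (hTinv k j _)
    rw [h2, hpow] at h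
    exact h
  have hprod : ∀ (x : Fin d → ℝ) (B : ℝ), ∏ j, (min (F (x j)) (1 - F (x j))) ^ (-B) =
      (∏ j, G (x j)) ^ B := fun x B => by
    rw [← Real.finsetProd_rpow _ _ (fun j _ => zero_le_one.trans (hG1 _))]
    exact Finset.prod_congr rfl fun j _ => hpow _ _
  have hP : ∀ x : Fin d → ℝ, 0 ≤ ∏ j, G (x j) :=
    fun x => Finset.prod_nonneg fun j _ => zero_le_one.trans (hG1 _)
  obtain ⟨C, A, hC, hA, hlay⟩ := aux_layers hd G hG1 hGmono L hLrow T B₁ C₁ hB₁ hC₁ hT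
    (List.finRange K)
  intro lam hlam B hB
  obtain ⟨C', hC', hfb⟩ := hf lam hlam (B / A) (by positivity)
  refine ⟨C' * C ^ (B / A), by positivity, fun u hu => ?_⟩
  have hu' : ∏ j, (min (u j) (1 - u j)) ^ (-B) = (∏ j, G (Finv (u j))) ^ B := by
    rw [← hprod (fun j => Finv (u j)) B]
    exact Finset.prod_congr rfl fun j _ => by simp only [hFinv _ (hu j)]
  refine (hfb _).trans ?_
  rw [hprod, hu', mul_assoc]
  refine mul_le_mul_of_nonneg_left ?_ hC'.le
  refine (Real.rpow_le_rpow (hP _) (hlay fun l => Finv (u l)) (by positivity)).trans ?_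
  rw [Real.mul_rpow hC.le (Real.rpow_nonneg (hP _) _), ← Real.rpow_mul (hP _),
    mul_div_cancel₀ _ hA.ne']
end
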